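/- arXiv:1703.04243 — 2 statements merged into one kernel-verified Lean document; each statement's English description precedes it below -/
import Mathlib

section
/- Let α, β > −1 and n ≥ 0 be an integer. Then for every real x, P_n^{(α,β)}(x) = d_{0,n} + 2 Σ_{k=1}^{n} d_{k,n} T_k(x), where T_k denotes the Chebyshev polynomial of the first kind and d_{k,n} are the Chebyshev-connection coefficients defined in terms of a terminating ₃F₂ sum. -/
open Finset

/-- Pochhammer symbol `(a)_j = a (a+1) ⋯ (a+j-1)`. -/
noncomputable def poch (a : ℝ) (j : ℕ) : ℝ := ∏ i ∈ Finset.range j, (a + i)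

/-- Generalized binomial coefficient `binom(a, m) = a (a-1) ⋯ (a-m+1) / m!`. -/
noncomputable def gbinom (a : ℝ) (m : ℕ) : ℝ :=
  (∏ i ∈ Finset.range m, (a - i)) / (Nat.factorial m)

/-- Jacobi polynomial `P_n^{(α,β)}(x)` of a real variable. -/
noncomputable def jacobiP (α β : ℝ) (n : ℕ) (x : ℝ) : ℝ :=
  (1 / 2 ^ n) * ∑ k ∈ Finset.range (n + 1),
    gbinom ((n : ℝ) + α) (n - k) * gbinom ((n : ℝ) + β) k * (x - 1) ^ k * (x + 1) ^ (n - k)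

/-- Jacobi polynomial `P_n^{(α,β)}(z)` of a complex variable. -/
noncomputable def jacobiC (α β : ℝ) (n : ℕ) (z : ℂ) : ℂ :=
  (1 / 2 ^ n) * ∑ k ∈ Finset.range (n + 1),
    ((gbinom ((n : ℝ) + α) (n - k) * gbinom ((n : ℝ) + β) k : ℝ) : ℂ) *
      (z - 1) ^ k * (z + 1) ^ (n - k)

/-- Chebyshev-connection coefficients `d_{k,n}`, given by a terminating ₃F₂ sum. -/
noncomputable def dCoeff (α β : ℝ) (n k : ℕ) : ℝ :=
  (poch ((n : ℝ) + α + β + 1) k * poch ((k : ℝ) + α + 1) (n - k)) /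
      ((Nat.factorial (n - k)) * 2 ^ (2 * k) * (Nat.factorial k)) *
    ∑ j ∈ Finset.range (n - k + 1),
      (poch ((k : ℝ) - n) j * poch ((n : ℝ) + k + α + β + 1) j * poch ((k : ℝ) + 1 / 2) j) /
        (poch ((k : ℝ) + α + 1) j * poch (2 * (k : ℝ) + 1) j * (Nat.factorial j))

/-- The Bernstein ellipse `E_ρ`: the set of points `z = (u + u⁻¹)/2` with `|u| = ρ`. -/
def bernsteinEllipse (ρ : ℝ) : Set ℂ :=
  {z : ℂ | ∃ u : ℂ, ‖u‖ = ρ ∧ z = (u + u⁻¹) / 2}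

lemma poch_succ (a : ℝ) (j : ℕ) : poch a (j + 1) = poch a j * (a + j) := by
  simp [poch, Finset.prod_range_succ]

lemma poch_add (a : ℝ) (m k : ℕ) : poch a (m + k) = poch a m * poch (a + m) k := by
  simp [poch, Finset.prod_range_add, add_assoc]

lemma poch_pos (a : ℝ) (ha : 0 < a) (j : ℕ) : 0 < poch a j := by
  unfold poch
  exact Finset.prod_pos fun i _ => by positivity

lemma gbinom_eq_choose (a : ℝ) (m : ℕ) : gbinom a m = Ring.choose a m := by
  have h := Ring.descPochhammer_eq_factorial_smul_choose a m
  have h2 : Polynomial.smeval (descPochhammer ℤ m) a = ∏ i ∈ Finset.range m, (a - i) := by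
    clear h
    induction m with
    | zero => simp [descPochhammer_zero, Polynomial.smeval_one]
    | succ m ih =>
      rw [descPochhammer_succ_right, Polynomial.smeval_mul, ih, Finset.prod_range_succ]
      simp [Polynomial.smeval_sub, Polynomial.smeval_X, Polynomial.smeval_natCast]
  unfold gbinom
  rw [← h2, h, nsmul_eq_mul, mul_div_cancel_left₀]
  exact_mod_cast Nat.factorial_ne_zero m

lemma gbinom_add_self (a : ℝ) (m : ℕ) :
    gbinom (a + m) m = poch (a + 1) m / (Nat.factorial m) := by
  unfold gbinom poch
  congr 1
  rw [← Finset.prod_range_reflect]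
  refine Finset.prod_congr rfl fun i hi => ?_
  have hi' := Finset.mem_range.1 hi
  have : ((m - 1 - i : ℕ) : ℝ) = m - 1 - i := by
    rw [Nat.cast_sub (by omega), Nat.cast_sub (by omega)]; simp
  rw [this]; ring

noncomputable def aCoeff (α β : ℝ) (n m : ℕ) : ℝ :=
  poch ((m : ℝ) + α + 1) (n - m) / (Nat.factorial (n - m)) *
    (poch ((n : ℝ) + α + β + 1) m / (Nat.factorial m))

lemma aCoeff_eq (α β : ℝ) (n m : ℕ) (hm : m ≤ n) :
    ∑ k ∈ Finset.range (m + 1), gbinom ((n : ℝ) + α) (n - k) * gbinom ((n : ℝ) + β) k *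
      ((n - k).choose (m - k) : ℝ) = aCoeff α β n m := by
  have h1 : poch ((m : ℝ) + α + 1) (n - m) / (Nat.factorial (n - m)) =
      Ring.choose ((n : ℝ) + α) (n - m) := by
    rw [← gbinom_add_self, gbinom_eq_choose, Nat.cast_sub hm]
    congr 1; ring
  have h2 : poch ((n : ℝ) + α + β + 1) m / (Nat.factorial m) =
      Ring.choose (((n : ℝ) + β) + (m + α)) m := by
    rw [← gbinom_add_self, gbinom_eq_choose]
    congr 1; ring
  unfold aCoeff
  rw [h1, h2, Ring.add_choose_eq m (Commute.all ((n : ℝ) + β) (m + α)),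
    Finset.Nat.sum_antidiagonal_eq_sum_range_succ
      (fun i j => Ring.choose ((n : ℝ) + β) i * Ring.choose ((m : ℝ) + α) j), Finset.mul_sum]
  refine Finset.sum_congr rfl fun k hk => ?_
  have hk' : k ≤ m := by have := Finset.mem_range.1 hk; omega
  have h3 := Ring.choose_smul_choose ((n : ℝ) + α) (n := n - k) (k := n - m) (by omega)
  have e1 : n - k - (n - m) = m - k := by omega
  have e2 : (n - k).choose (n - m) = (n - k).choose (m - k) :=
    Nat.choose_symm_of_eq_add (by omega)
  have e3 : (n : ℝ) + α - ((n - m : ℕ) : ℝ) = m + α := by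
    rw [Nat.cast_sub hm]; ring
  rw [e1, e2, e3, nsmul_eq_mul] at h3
  rw [gbinom_eq_choose, gbinom_eq_choose]
  linear_combination (Ring.choose ((n : ℝ) + β) k) * h3

lemma jacobiP_eq (α β : ℝ) (n : ℕ) (x : ℝ) :
    jacobiP α β n x = ∑ m ∈ Finset.range (n + 1), aCoeff α β n m * ((x - 1) / 2) ^ m := by
  have h : ∀ m ∈ Finset.range (n + 1), aCoeff α β n m * ((x - 1) / 2) ^ m =
      ∑ k ∈ Finset.range (m + 1), gbinom ((n : ℝ) + α) (n - k) * gbinom ((n : ℝ) + β) k *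
      ((n - k).choose (m - k) : ℝ) * ((x - 1) / 2) ^ m := by
    intro m hm
    rw [← aCoeff_eq α β n m (by have := Finset.mem_range.1 hm; omega), Finset.sum_mul]
  rw [Finset.sum_congr rfl h]
  rw [Finset.sum_comm' (t' := Finset.range (n + 1)) (s' := fun k => Finset.Ico k (n + 1))
    (by intro a b; simp only [Finset.mem_range, Finset.mem_Ico]; omega)]
  unfold jacobiP
  rw [Finset.mul_sum]
  refine Finset.sum_congr rfl fun k hk => ?_
  have hk' : k ≤ n := by have := Finset.mem_range.1 hk; omega
  rw [Finset.sum_Ico_eq_sum_range, show n + 1 - k = n - k + 1 by omega]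
  have hx : (x + 1) ^ (n - k) = 2 ^ (n - k) * ((x - 1) / 2 + 1) ^ (n - k) := by
    rw [← mul_pow]; congr 1; ring
  have hy : (x - 1) ^ k = 2 ^ k * ((x - 1) / 2) ^ k := by
    rw [← mul_pow]; congr 1; ring
  have h2 : (2 : ℝ) ^ n = 2 ^ k * 2 ^ (n - k) := by rw [← pow_add]; congr 1; omega
  rw [hx, hy, h2, add_pow, Finset.mul_sum, Finset.mul_sum, Finset.mul_sum]
  refine Finset.sum_congr rfl fun j hj => ?_
  rw [show k + j - k = j by omega, pow_add]
  field_simp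
  simp

lemma cheb_diff (x : ℝ) (m : ℕ) (s : ℤ) :
    (fwdDiff (1 : ℤ))^[2 * m] (fun s : ℤ => (Polynomial.Chebyshev.T ℝ s).eval x) s =
      (2 * (x - 1)) ^ m * (Polynomial.Chebyshev.T ℝ (s + m)).eval x := by
  induction m generalizing s with
  | zero => simp
  | succ m ih =>
    rw [show 2 * (m + 1) = (2 * m + 1) + 1 by ring, Function.iterate_succ_apply',
      Function.iterate_succ_apply']
    simp only [fwdDiff, ih]
    have h := congrArg (Polynomial.eval x) (Polynomial.Chebyshev.T_add_two ℝ (s + m))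
    simp only [Polynomial.eval_sub, Polynomial.eval_mul, Polynomial.eval_X,
      Polynomial.eval_ofNat] at h
    rw [show s + 1 + 1 + (m : ℤ) = s + m + 2 by ring, h,
      show s + 1 + (m : ℤ) = s + m + 1 by ring,
      show s + ((m + 1 : ℕ) : ℤ) = s + m + 1 by push_cast; ring]
    ring

lemma sum_symm (f : ℕ → ℝ) (m : ℕ) (hf : ∀ k ≤ m, f (m - k) = f (m + k)) :
    ∑ i ∈ Finset.range (2 * m + 1), f i = f m + 2 * ∑ k ∈ Finset.Icc 1 m, f (m + k) := by
  have h1 : ∑ k ∈ Finset.Icc 1 m, f (m + k) = ∑ k ∈ Finset.range m, f (m + (k + 1)) := by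
    rw [← Finset.Ico_add_one_right_eq_Icc, Finset.sum_Ico_eq_sum_range]
    simp [add_comm]
  rw [show 2 * m + 1 = m + (m + 1) by ring, Finset.sum_range_add, Finset.sum_range_succ', h1,
    ← Finset.sum_range_reflect]
  have : ∑ j ∈ Finset.range m, f (m - 1 - j) = ∑ k ∈ Finset.range m, f (m + (k + 1)) := by
    refine Finset.sum_congr rfl fun j hj => ?_
    have := Finset.mem_range.1 hj
    rw [← hf (j + 1) (by omega)]; congr 1; omega
  rw [this]; simp; ring

lemma pow_cheb (x : ℝ) (n m : ℕ) (hm : m ≤ n) :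
    (2 * (x - 1)) ^ m = (-1) ^ m * (((2 * m).choose m : ℝ) + 2 * ∑ k ∈ Finset.Icc 1 n,
      (-1) ^ k * ((2 * m).choose (m + k) : ℝ) * (Polynomial.Chebyshev.T ℝ (k : ℤ)).eval x) := by
  have h := cheb_diff x m (-m)
  rw [fwdDiff_iter_eq_sum_shift, sum_symm] at h
  · rw [neg_add_cancel, Polynomial.Chebyshev.T_zero, Polynomial.eval_one, mul_one] at h
    rw [← h]
    have hs : ∑ k ∈ Finset.Icc 1 n, (-1) ^ k * ((2 * m).choose (m + k) : ℝ) *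
          (Polynomial.Chebyshev.T ℝ (k : ℤ)).eval x =
        ∑ k ∈ Finset.Icc 1 m, (-1) ^ k * ((2 * m).choose (m + k) : ℝ) *
          (Polynomial.Chebyshev.T ℝ (k : ℤ)).eval x := by
      symm
      refine Finset.sum_subset (Finset.Icc_subset_Icc_right hm) fun k hk hk' => ?_
      simp only [Finset.mem_Icc] at hk hk'
      rw [Nat.choose_eq_zero_of_lt (by omega)]; simp
    rw [hs, mul_add, mul_left_comm ((-1 : ℝ) ^ m), Finset.mul_sum (a := (-1 : ℝ) ^ m)]
    congr 1
    · rw [show 2 * m - m = m by omega]; simp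
    · congr 1
      refine Finset.sum_congr rfl fun k hk => ?_
      have hk' := Finset.mem_Icc.1 hk
      have e : (-1 : ℝ) ^ (2 * m - (m + k)) = (-1) ^ m * (-1) ^ k := by
        have e0 : m + k = 2 * m - (m + k) + 2 * k := by omega
        have e1 : (-1 : ℝ) ^ (m + k) = (-1) ^ (2 * m - (m + k) + 2 * k) := congrArg _ e0
        rw [← pow_add, e1, pow_add _ _ (2 * k), pow_mul]
        simp
      simp only [zsmul_eq_mul]
      push_cast
      rw [e, show -(m : ℤ) + (m + k) • (1 : ℤ) = k by simp]
      ring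
  · intro k hk
    have e1 : (2 * m).choose (m - k) = (2 * m).choose (m + k) :=
      Nat.choose_symm_of_eq_add (by omega)
    have e2 : (-1 : ℤ) ^ (2 * m - (m - k)) = (-1) ^ (2 * m - (m + k)) := by
      rw [show 2 * m - (m - k) = 2 * m - (m + k) + 2 * k by omega, pow_add, pow_mul]
      simp
    have e3 : (Polynomial.Chebyshev.T ℝ (-(m : ℤ) + (m - k) • (1 : ℤ))) =
        Polynomial.Chebyshev.T ℝ (-(m : ℤ) + (m + k) • (1 : ℤ)) := by
      rw [← Polynomial.Chebyshev.T_neg]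
      congr 1
      simp only [nsmul_eq_mul, mul_one]
      push_cast [hk]
      ring
    rw [e1, e2, e3]

lemma poch_neg_nat (N j : ℕ) (hj : j ≤ N) :
    poch (-(N : ℝ)) j * (Nat.factorial (N - j)) = (-1) ^ j * (Nat.factorial N) := by
  induction j with
  | zero => simp [poch]
  | succ j ih =>
    have ih := ih (by omega)
    have : N - j = (N - (j + 1)) + 1 := by omega
    rw [this, Nat.factorial_succ, ← this] at ih
    rw [poch_succ, pow_succ]
    push_cast [show j ≤ N by omega] at ih
    linear_combination (-1) * ih

lemma poch_nat (N j : ℕ) :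
    poch ((N : ℝ) + 1) j * (Nat.factorial N) = (Nat.factorial (N + j)) := by
  induction j with
  | zero => simp [poch]
  | succ j ih =>
    rw [poch_succ, ← add_assoc, Nat.factorial_succ]
    push_cast
    rw [← ih]; ring

lemma poch_half (k j : ℕ) :
    poch ((k : ℝ) + 1 / 2) j * 4 ^ j * (Nat.factorial (k + j)) * (Nat.factorial (2 * k)) =
      (Nat.factorial (2 * k + 2 * j)) * (Nat.factorial k) := by
  induction j with
  | zero => simp [poch]; ring
  | succ j ih =>
    rw [poch_succ, ← add_assoc, show 2 * k + 2 * (j + 1) = 2 * k + 2 * j + 1 + 1 by ring,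
      Nat.factorial_succ, Nat.factorial_succ, Nat.factorial_succ]
    push_cast
    linear_combination (2 * (k : ℝ) + 2 * j + 1 + 1) * (2 * k + 2 * j + 1) * ih

lemma dCoeff_eq (α β : ℝ) (hα : -1 < α) (n k : ℕ) (hk : k ≤ n) :
    dCoeff α β n k = ∑ m ∈ Finset.range (n + 1),
      aCoeff α β n m * (1 / 4) ^ m * (-1) ^ m * ((-1) ^ k * ((2 * m).choose (m + k) : ℝ)) := by
  have hs : ∑ m ∈ Finset.range (n + 1),
      aCoeff α β n m * (1 / 4) ^ m * (-1) ^ m * ((-1) ^ k * ((2 * m).choose (m + k) : ℝ)) =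
      ∑ m ∈ Finset.Ico k (n + 1),
      aCoeff α β n m * (1 / 4) ^ m * (-1) ^ m * ((-1) ^ k * ((2 * m).choose (m + k) : ℝ)) := by
    symm
    refine Finset.sum_subset (fun m hm => by simp at hm ⊢; omega) fun m hm hm' => ?_
    simp only [Finset.mem_Ico, Finset.mem_range] at hm hm'
    rw [Nat.choose_eq_zero_of_lt (by omega)]; simp
  rw [hs, Finset.sum_Ico_eq_sum_range, show n + 1 - k = n - k + 1 by omega]
  unfold dCoeff
  rw [Finset.mul_sum]
  refine Finset.sum_congr rfl fun j hj => ?_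
  have hj' : j ≤ n - k := by have := Finset.mem_range.1 hj; omega
  unfold aCoeff
  have h1 : poch ((k : ℝ) + α + 1) (n - k) =
      poch ((k : ℝ) + α + 1) j * poch (((k + j : ℕ) : ℝ) + α + 1) (n - (k + j)) := by
    rw [show n - k = j + (n - (k + j)) by omega, poch_add]
    congr 2; push_cast; ring
  have h2 : poch ((n : ℝ) + α + β + 1) (k + j) =
      poch ((n : ℝ) + α + β + 1) k * poch ((n : ℝ) + k + α + β + 1) j := by
    rw [poch_add]; congr 2; ring
  have h3 := poch_neg_nat (n - k) j hj'
  rw [show n - k - j = n - (k + j) by omega,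
    show -((n - k : ℕ) : ℝ) = k - n by push_cast [hk]; ring] at h3
  have h4 := poch_nat (2 * k) j
  push_cast at h4
  have h5 := poch_half k j
  have h6 : ((2 * (k + j)).choose (k + j + k) : ℝ) * (Nat.factorial (2 * k + j)) *
      (Nat.factorial j) = (Nat.factorial (2 * k + 2 * j)) := by
    have := Nat.choose_mul_factorial_mul_factorial (n := 2 * (k + j)) (k := k + j + k) (by omega)
    rw [show 2 * (k + j) - (k + j + k) = j by omega] at this
    rw [show 2 * k + 2 * j = 2 * (k + j) by ring, show 2 * k + j = k + j + k by ring]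
    exact_mod_cast this
  have p1 : poch ((k : ℝ) + α + 1) j ≠ 0 :=
    (poch_pos _ (by have : (0 : ℝ) ≤ k := k.cast_nonneg
                    linarith) j).ne'
  have p2 : poch (2 * (k : ℝ) + 1) j ≠ 0 := (poch_pos _ (by positivity) j).ne'
  have f1 : ((Nat.factorial (n - k)) : ℝ) ≠ 0 := by positivity
  have f2 : ((Nat.factorial (n - (k + j))) : ℝ) ≠ 0 := by positivity
  have f3 : ((Nat.factorial k) : ℝ) ≠ 0 := by positivity
  have f4 : ((Nat.factorial j) : ℝ) ≠ 0 := by positivity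
  have f5 : ((Nat.factorial (k + j)) : ℝ) ≠ 0 := by positivity
  have f6 : ((Nat.factorial (2 * k)) : ℝ) ≠ 0 := by positivity
  have f7 : ((Nat.factorial (2 * k + j)) : ℝ) ≠ 0 := by positivity
  have g3 : poch ((k : ℝ) - n) j =
      (-1) ^ j * (Nat.factorial (n - k)) / (Nat.factorial (n - (k + j))) := by
    rw [eq_div_iff f2, h3]
  have g4 : poch (2 * (k : ℝ) + 1) j = (Nat.factorial (2 * k + j)) / (Nat.factorial (2 * k)) := by
    rw [eq_div_iff f6, h4]
  have g5 : poch ((k : ℝ) + 1 / 2) j = (Nat.factorial (2 * k + 2 * j)) * (Nat.factorial k) /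
      (4 ^ j * (Nat.factorial (k + j)) * (Nat.factorial (2 * k))) := by
    rw [eq_div_iff (by positivity), ← h5]; ring
  have s1 : (-1 : ℝ) ^ (k + j) * (-1) ^ k = (-1) ^ j := by
    rw [← pow_add, show k + j + k = 2 * k + j by ring, pow_add, pow_mul]; simp
  have s2 : (1 / 4 : ℝ) ^ (k + j) = 1 / (2 ^ (2 * k) * 4 ^ j) := by
    rw [one_div_pow, pow_add, pow_mul]; norm_num
  rw [← mul_assoc, mul_assoc _ ((-1 : ℝ) ^ (k + j)), s1, s2, h2, h1, g3, g4, g5, ← h6]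
  field_simp

/-- For `α, β > -1`, the Jacobi polynomial expands in Chebyshev polynomials of the
first kind as `P_n^{(α,β)}(x) = d_{0,n} + 2 ∑_{k=1}^{n} d_{k,n} T_k(x)`. -/
theorem jacobi_chebyshev_expansion
    (α β : ℝ) (hα : -1 < α) (hβ : -1 < β) (n : ℕ) (x : ℝ) :
    jacobiP α β n x =
      dCoeff α β n 0 + 2 * ∑ k ∈ Finset.Icc 1 n,
        dCoeff α β n k * (Polynomial.Chebyshev.T ℝ (k : ℤ)).eval x := by
  rw [jacobiP_eq]
  have hd : ∑ k ∈ Finset.Icc 1 n,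
        dCoeff α β n k * (Polynomial.Chebyshev.T ℝ (k : ℤ)).eval x =
      ∑ m ∈ Finset.range (n + 1), ∑ k ∈ Finset.Icc 1 n,
        aCoeff α β n m * (1 / 4) ^ m * (-1) ^ m * ((-1) ^ k * ((2 * m).choose (m + k) : ℝ)) *
          (Polynomial.Chebyshev.T ℝ (k : ℤ)).eval x := by
    rw [Finset.sum_comm]
    refine Finset.sum_congr rfl fun k hk => ?_
    rw [dCoeff_eq α β hα n k (Finset.mem_Icc.1 hk).2, Finset.sum_mul]
  rw [hd, dCoeff_eq α β hα n 0 (by omega), Finset.mul_sum, ← Finset.sum_add_distrib]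
  refine Finset.sum_congr rfl fun m hm => ?_
  have hm' : m ≤ n := by have := Finset.mem_range.1 hm; omega
  have e : ((x - 1) / 2) ^ m = (1 / 4) ^ m * (2 * (x - 1)) ^ m := by
    rw [← mul_pow]; congr 1; ring
  rw [e, pow_cheb x n m hm']
  have e2 : ∑ k ∈ Finset.Icc 1 n,
        aCoeff α β n m * (1 / 4) ^ m * (-1) ^ m * ((-1) ^ k * ((2 * m).choose (m + k) : ℝ)) *
          (Polynomial.Chebyshev.T ℝ (k : ℤ)).eval x =
      aCoeff α β n m * (1 / 4) ^ m * (-1) ^ m * ∑ k ∈ Finset.Icc 1 n,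
        (-1) ^ k * ((2 * m).choose (m + k) : ℝ) * (Polynomial.Chebyshev.T ℝ (k : ℤ)).eval x := by
    rw [Finset.mul_sum]
    refine Finset.sum_congr rfl fun k _ => by ring
  rw [e2]
  simp only [pow_zero, add_zero, one_mul]
  ring
end

section
/- Let α, β > −1 with α < β and α + β ≥ −1, let ρ ≥ 1 and let n ≥ 1 be an integer. Then for every z on the Bernstein ellipse E_ρ, |P_n^{(α,β)}(z)| ≤ |P_n^{(α,β)}(−(ρ + ρ⁻¹)/2)|, and equality holds if and only if z = −(ρ + ρ⁻¹)/2, i.e. the maximum of |P_n^{(α,β)}| over E_ρ is attained uniquely at the left endpoint of the major axis. -/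
open Finset

open Polynomial in
/-- The Jacobi differential operator. -/
noncomputable def jacL (α β l : ℝ) : ℝ[X] →ₗ[ℝ] ℝ[X] :=
  LinearMap.mulLeft ℝ (1 - X ^ 2) ∘ₗ derivative ∘ₗ derivative
    + LinearMap.mulLeft ℝ (C (β - α) - C (α + β + 2) * X) ∘ₗ derivative
    + LinearMap.mulLeft ℝ (C l)

open Polynomial in
theorem jacL_apply (α β l : ℝ) (y : ℝ[X]) : jacL α β l y =
    (1 - X ^ 2) * derivative (derivative y) + (C (β - α) - C (α + β + 2) * X) * derivative y
      + C l * y := rfl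

open Polynomial in
theorem jacL_basis (α β : ℝ) (k r : ℕ) :
    jacL α β (((k : ℝ) + r) * ((k : ℝ) + r + α + β + 1)) ((X - 1) ^ k * (X + 1) ^ r) =
      - C (2 * k * (k + α)) * ((X - 1) ^ (k - 1) * (X + 1) ^ r)
      + C (2 * r * (r + β)) * ((X - 1) ^ k * (X + 1) ^ (r - 1)) := by
  rw [jacL_apply]
  rcases k with _ | _ | k <;> rcases r with _ | _ | r <;>
  · simp [derivative_pow, derivative_mul, C_ofNat]
    try ring

theorem gbinom_succ (a : ℝ) (m : ℕ) : gbinom a (m + 1) * (m + 1) = gbinom a m * (a - m) := by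
  unfold gbinom
  rw [Finset.prod_range_succ, Nat.factorial_succ]
  have : (m.factorial : ℝ) ≠ 0 := by positivity
  push_cast
  field_simp

/-- Coefficients of the Jacobi polynomial. -/
noncomputable def jacA (α β : ℝ) (n k : ℕ) : ℝ :=
  gbinom ((n : ℝ) + α) (n - k) * gbinom ((n : ℝ) + β) k

theorem jacA_succ (α β : ℝ) (k r : ℕ) :
    jacA α β (k + r + 1) (k + 1) * (k + 1) * (k + 1 + α)
      = jacA α β (k + r + 1) k * (r + 1) * (r + 1 + β) := by
  unfold jacA
  have h1 : k + r + 1 - k = r + 1 := by omega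
  have h2 : k + r + 1 - (k + 1) = r := by omega
  rw [h1, h2]
  have e1 := gbinom_succ (((k + r + 1 : ℕ) : ℝ) + α) r
  have e2 := gbinom_succ (((k + r + 1 : ℕ) : ℝ) + β) k
  generalize gbinom (((k + r + 1 : ℕ) : ℝ) + α) r = x at *
  generalize gbinom (((k + r + 1 : ℕ) : ℝ) + α) (r+1) = x' at *
  generalize gbinom (((k + r + 1 : ℕ) : ℝ) + β) k = y at *
  generalize gbinom (((k + r + 1 : ℕ) : ℝ) + β) (k+1) = y' at *
  push_cast at e1 e2
  linear_combination x * (k + 1 + α) * e2 - y * (r+1+β) * e1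

open Polynomial in
/-- The Jacobi polynomial (without the factor `2⁻ⁿ`). -/
noncomputable def jacPoly (α β : ℝ) (n : ℕ) : ℝ[X] :=
  ∑ k ∈ Finset.range (n + 1), jacA α β n k • ((X - 1) ^ k * (X + 1) ^ (n - k))

open Polynomial in
theorem jacL_partial (α β : ℝ) (n m : ℕ) (hm : m ≤ n) :
    jacL α β (n * (n + α + β + 1))
      (∑ k ∈ Finset.range m, jacA α β n k • ((X - 1) ^ k * (X + 1) ^ (n - k))) =
      C (2 * m * (m + α) * jacA α β n m) * ((X - 1) ^ (m - 1) * (X + 1) ^ (n - m)) := by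
  induction m with
  | zero => simp
  | succ m ih =>
    obtain ⟨r, rfl⟩ : ∃ r, n = m + r + 1 := ⟨n - m - 1, by omega⟩
    have h1 : m + r + 1 - m = r + 1 := by omega
    have h2 : m + r + 1 - (m + 1) = r := by omega
    have hb := jacL_basis α β m (r + 1)
    have hA := jacA_succ α β m r
    rw [Finset.sum_range_succ, map_add, ih (by omega), map_smul, h1, h2]
    have hl : (((m + r + 1 : ℕ) : ℝ) * (((m + r + 1 : ℕ) : ℝ) + α + β + 1))
      = (((m : ℝ) + (r + 1 : ℕ)) * ((m : ℝ) + (r + 1 : ℕ) + α + β + 1)) := by push_cast; ring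
    rw [hl, hb, smul_eq_C_mul]
    have hA' := congrArg (C : ℝ → ℝ[X]) hA
    simp only [Nat.add_sub_cancel, Nat.cast_add, Nat.cast_one, C_mul, C_add, C_ofNat, C_1] at hA' ⊢
    linear_combination -2 * ((X - 1) ^ m * (X + 1) ^ r) * hA'

open Polynomial in
theorem jacL_jacPoly (α β : ℝ) (n : ℕ) :
    jacL α β (n * (n + α + β + 1)) (jacPoly α β n) = 0 := by
  unfold jacPoly
  rw [Finset.sum_range_succ, map_add, jacL_partial α β n n le_rfl, map_smul]
  have hb := jacL_basis α β n 0
  simp only [Nat.cast_zero, add_zero] at hb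
  rw [Nat.sub_self, hb, smul_eq_C_mul]
  simp only [C_mul, C_0]
  ring

open Polynomial in
theorem jacL_coeff (α β l : ℝ) (y : ℝ[X]) (m : ℕ) :
    (jacL α β l y).coeff m = (m + 2) * (m + 1) * y.coeff (m + 2)
      + (β - α) * (m + 1) * y.coeff (m + 1)
      + (l - m * (m + α + β + 1)) * y.coeff m := by
  have h : jacL α β l y = derivative (derivative y) - X ^ 2 * derivative (derivative y)
      + C (β - α) * derivative y - C (α + β + 2) * (X * derivative y) + C l * y := by
    rw [jacL_apply]; ring
  rw [h]
  simp only [coeff_add, coeff_sub, coeff_C_mul]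
  rcases m with _ | _ | m <;>
  · simp [coeff_X_pow_mul', coeff_derivative]
    try ring

open Polynomial in
theorem jacL_unique0 (α β : ℝ) (hs : -1 ≤ α + β) (n : ℕ) (y : ℝ[X]) (hy : y.natDegree ≤ n)
    (hn : y.coeff n = 0) (hL : jacL α β (n * (n + α + β + 1)) y = 0) : y = 0 := by
  by_contra h0
  have hlt : y.natDegree < n := by
    rcases hy.lt_or_eq with h | h
    · exact h
    · exfalso; apply h0; rw [← leadingCoeff_eq_zero, leadingCoeff, h, hn]
  have := jacL_coeff α β (n * (n + α + β + 1)) y y.natDegree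
  rw [hL, coeff_eq_zero_of_natDegree_lt (show y.natDegree < y.natDegree + 2 by omega),
    coeff_eq_zero_of_natDegree_lt (show y.natDegree < y.natDegree + 1 by omega)] at this
  simp only [coeff_zero, mul_zero, zero_add] at this
  have hl : y.coeff y.natDegree ≠ 0 := by simpa using h0
  have h3 := (mul_eq_zero.1 this.symm).resolve_right hl
  have h4 : (y.natDegree : ℝ) < n := by exact_mod_cast hlt
  have h5 : (0 : ℝ) ≤ y.natDegree := by positivity
  nlinarith [mul_pos (sub_pos.2 h4) (show (0:ℝ) < n + y.natDegree + (α + β + 1) by linarith)]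

open Polynomial in
theorem jacL_unique (α β : ℝ) (hs : -1 ≤ α + β) (n : ℕ) (y w : ℝ[X]) (hy : y.natDegree ≤ n)
    (hw : w.natDegree ≤ n) (hy0 : y ≠ 0) (hw0 : w ≠ 0)
    (hL : jacL α β (n * (n + α + β + 1)) y = 0) (hL' : jacL α β (n * (n + α + β + 1)) w = 0) :
    ∃ c : ℝ, c ≠ 0 ∧ y = c • w := by
  have h1 : y.coeff n ≠ 0 := fun h => hy0 (jacL_unique0 α β hs n y hy h hL)
  have h2 : w.coeff n ≠ 0 := fun h => hw0 (jacL_unique0 α β hs n w hw h hL')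
  refine ⟨y.coeff n / w.coeff n, div_ne_zero h1 h2, ?_⟩
  rw [← sub_eq_zero]
  apply jacL_unique0 α β hs n
  · exact (natDegree_sub_le _ _).trans (max_le hy ((natDegree_smul_le _ _).trans hw))
  · simp [h2]
  · rw [map_sub, map_smul, hL, hL']; simp

open Polynomial in
theorem jacL_T (α β l : ℝ) (k : ℤ) :
    2 * jacL α β l (Chebyshev.T ℝ k) =
      C (l - k ^ 2 - (α + β + 1) * k) * Chebyshev.U ℝ k
      - C (2 * (α - β) * k) * Chebyshev.U ℝ (k - 1)
      - C (l - k ^ 2 + (α + β + 1) * k) * Chebyshev.U ℝ (k - 2) := by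
  have h1 := Chebyshev.one_sub_X_sq_mul_derivative_derivative_T_eq_poly_in_T (R := ℝ) k
  have h2 := Chebyshev.T_derivative_eq_U (R := ℝ) k
  have h3 := Chebyshev.T_eq_U_sub_X_mul_U ℝ k
  have h4 := Chebyshev.U_eq ℝ k
  rw [jacL_apply]
  simp only [Function.iterate_succ, Function.iterate_zero, Function.comp, id] at h1
  rw [h1, h2, h3]
  simp only [C_mul, C_add, C_sub, C_pow, C_ofNat, C_1, map_intCast]
  rw [h4]
  ring

open Polynomial in
theorem jacL_cheb_partial (α β : ℝ) (n : ℕ) (l : ℝ) (c : ℕ → ℝ)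
    (hc : ∀ j < n, (l - j ^ 2 - (α + β + 1) * j) * c j = 2 * (α - β) * (j + 1) * c (j + 1)
      + (l - (j + 2) ^ 2 + (α + β + 1) * (j + 2)) * c (j + 2))
    (m : ℕ) (hm : m ≤ n) :
    2 * jacL α β l (C (c 0 / 2)
      + ∑ k ∈ Finset.range m, c (k + 1) • Chebyshev.T ℝ ((k + 1 : ℕ) : ℤ)) =
    C ((l - m ^ 2 - (α + β + 1) * m) * c m) * Chebyshev.U ℝ m
      + C ((l - (m + 1) ^ 2 + (α + β + 1) * (m + 1)) * c (m + 1)) * Chebyshev.U ℝ ((m : ℤ) - 1) := by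
  induction m with
  | zero =>
    have : (2 : ℝ[X]) = C 2 := rfl
    simp [jacL_apply]
    rw [this, ← C_mul, ← C_mul, ← C_mul]
    congr 1
    ring
  | succ m ih =>
    rw [Finset.sum_range_succ, ← add_assoc, map_add, mul_add, ih (by omega), map_smul,
      mul_smul_comm, jacL_T, smul_eq_C_mul]
    have h := congrArg (C : ℝ → ℝ[X]) (hc m (by omega))
    have e1 : ((m + 1 : ℕ) : ℤ) - 1 = m := by push_cast; ring
    have e2 : ((m + 1 : ℕ) : ℤ) - 2 = (m : ℤ) - 1 := by push_cast; ring
    rw [e1, e2]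
    push_cast
    simp only [C_mul, C_add, C_sub, C_pow, C_ofNat, C_1] at h ⊢
    linear_combination Chebyshev.U ℝ (m : ℤ) * h

theorem exists_coeffs (n : ℕ) : ∀ (f g : ℕ → ℝ), (∀ j < n, 0 < f j) → (∀ j, j + 1 < n → 0 ≤ g j) →
    ∃ c : ℕ → ℝ, c (n + 1) = 0 ∧ (∀ k ≤ n, 0 < c k) ∧
      ∀ j < n, c j = f j * c (j + 1) + g j * c (j + 2) := by
  induction n with
  | zero =>
    intro f g _ _
    exact ⟨fun k => if k = 0 then 1 else 0, by simp, by simp, by simp⟩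
  | succ n ih =>
    intro f g hf hg
    obtain ⟨c, h1, h2, h3⟩ := ih (fun j => f (j + 1)) (fun j => g (j + 1))
      (fun j hj => hf _ (by omega)) (fun j hj => hg _ (by omega))
    refine ⟨fun k => Nat.casesOn k (f 0 * c 0 + g 0 * c 1) c, h1, ?_, ?_⟩
    · intro k hk
      rcases k with _ | k
      · have a1 := mul_pos (hf 0 (by omega)) (h2 0 (by omega))
        have a2 : 0 ≤ g 0 * c 1 := by
          rcases Nat.eq_zero_or_pos n with h | h
          · subst h; simp at h1; simp [h1]
          · exact mul_nonneg (hg 0 (by omega)) (h2 1 h).le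
        show 0 < f 0 * c 0 + g 0 * c 1
        linarith
      · exact h2 k (by omega)
    · intro j hj
      rcases j with _ | j
      · rfl
      · exact h3 j (by omega)

open Polynomial in
theorem jacPoly_expansion (α β : ℝ) (hα : -1 < α) (hab : α < β) (hs : -1 ≤ α + β)
    (n : ℕ) (hn : 1 ≤ n) : ∃ (K : ℝ) (d : ℕ → ℝ), K ≠ 0 ∧ (∀ k ≤ n, 0 < d k) ∧
    jacPoly α β n = K • (C (d 0 / 2)
      + ∑ k ∈ Finset.range n, ((-1) ^ (k + 1) * d (k + 1)) • Chebyshev.T ℝ ((k + 1 : ℕ) : ℤ)) := by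
  set l : ℝ := n * (n + α + β + 1) with hl
  have hp : ∀ j < n, 0 < l - (j : ℝ) ^ 2 - (α + β + 1) * j := by
    intro j hj
    have h4 : (j : ℝ) < n := by exact_mod_cast hj
    have h5 : (0 : ℝ) ≤ j := by positivity
    nlinarith [mul_pos (sub_pos.2 h4) (show (0:ℝ) < n + j + (α + β + 1) by linarith)]
  obtain ⟨d, h1, h2, h3⟩ := exists_coeffs n
    (fun j => 2 * (β - α) * (j + 1) / (l - (j : ℝ) ^ 2 - (α + β + 1) * j))
    (fun j => (l - ((j : ℝ) + 2) ^ 2 + (α + β + 1) * (j + 2)) / (l - (j : ℝ) ^ 2 - (α + β + 1) * j))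
    (fun j hj => by
      have := hp j hj
      have := sub_pos.2 hab
      positivity)
    (fun j hj => by
      apply div_nonneg _ (hp j (by omega)).le
      have h4 : (j : ℝ) + 2 ≤ n := by exact_mod_cast hj
      have h5 : (0 : ℝ) ≤ j := by positivity
      nlinarith [mul_nonneg (show (0:ℝ) ≤ n + j + 2 by linarith)
        (show (0:ℝ) ≤ n - (j + 2) + (α + β + 1) by linarith)])
  have hc := jacL_cheb_partial α β n l (fun k => (-1) ^ k * d k) (by
    intro j hj
    have hpj := (hp j hj).ne'
    have := h3 j hj
    rw [div_mul_eq_mul_div, div_mul_eq_mul_div, ← add_div, eq_div_iff hpj] at this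
    linear_combination (-1) ^ j * this) n le_rfl
  simp only [h1, pow_zero, one_mul] at hc
  have hz : l - (n : ℝ) ^ 2 - (α + β + 1) * n = 0 := by rw [hl]; ring
  rw [hz] at hc
  simp only [zero_mul, mul_zero, C_0, add_zero, mul_eq_zero, OfNat.ofNat_ne_zero, false_or] at hc
  suffices hh : ∃ c : ℝ, c ≠ 0 ∧ jacPoly α β n = c • _ by
    obtain ⟨K, hK, hK'⟩ := hh
    exact ⟨K, d, hK, h2, hK'⟩
  refine jacL_unique α β hs n (jacPoly α β n) _ ?_ ?_ ?_ ?_ (jacL_jacPoly α β n) hc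
  · unfold jacPoly
    apply natDegree_sum_le_of_forall_le
    intro k hk
    have hk' : k ≤ n := by simpa [Nat.lt_succ_iff] using hk
    refine (natDegree_smul_le _ _).trans (natDegree_mul_le.trans ?_)
    have a1 : ((X - 1 : ℝ[X]) ^ k).natDegree ≤ k := by
      refine natDegree_pow_le.trans ?_
      have : (X - 1 : ℝ[X]).natDegree = 1 := natDegree_X_sub_C (1 : ℝ)
      rw [this, mul_one]
    have a2 : ((X + 1 : ℝ[X]) ^ (n - k)).natDegree ≤ n - k := by
      refine natDegree_pow_le.trans ?_
      have : (X + 1 : ℝ[X]).natDegree = 1 := natDegree_X_add_C (1 : ℝ)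
      rw [this, mul_one]
    omega
  · refine (natDegree_add_le _ _).trans (max_le (by simp) ?_)
    apply natDegree_sum_le_of_forall_le
    intro k hk
    have hk' : k < n := by simpa using hk
    refine (natDegree_smul_le _ _).trans ?_
    rw [Chebyshev.natDegree_T]
    simp only [Int.natAbs_natCast]
    omega
  · intro h0
    have := congrArg (eval 1) h0
    unfold jacPoly at this
    rw [eval_finsetSum, Finset.sum_range_succ', Finset.sum_eq_zero] at this
    · simp [jacA, gbinom] at this
      rcases this with h | h
      · rw [Finset.prod_eq_zero_iff] at h
        obtain ⟨i, hi, h⟩ := h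
        have : i + 1 ≤ n := by simpa using hi
        have : (i : ℝ) + 1 ≤ n := by exact_mod_cast this
        linarith
      · exact (Nat.factorial_ne_zero _ h)
    · intro k hk; simp
  · intro h0
    have := congrArg (eval (-1)) h0
    rw [eval_add, eval_finsetSum] at this
    have hs : ∀ k ∈ Finset.range n, 0 ≤
        eval (-1) (((-1 : ℝ) ^ (k + 1) * d (k + 1)) • Chebyshev.T ℝ ((k + 1 : ℕ) : ℤ)) := by
      intro k hk
      have hk' : k < n := by simpa using hk
      have := h2 (k + 1) hk'
      rw [eval_smul, Chebyshev.T_eval_neg_one, smul_eq_mul]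
      have : (((((k + 1 : ℕ) : ℤ).negOnePow : ℤˣ) : ℤ) : ℝ) = (-1) ^ (k + 1) := by
        rw [Int.negOnePow_def]; simp [pow_succ, zpow_add]
      rw [this, mul_right_comm, ← mul_pow]
      simp; linarith
    have h0 := Finset.sum_nonneg hs
    simp only [eval_C, eval_zero] at this
    linarith [h2 0 (by omega)]

open Polynomial in
theorem cheb_joukowski (u : ℂ) (hu : u ≠ 0) (k : ℕ) :
    (Chebyshev.T ℂ k).eval ((u + u⁻¹) / 2) = (u ^ k + (u⁻¹) ^ k) / 2 := by
  induction k using Nat.twoStepInduction with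
  | zero => simp
  | one => simp
  | more k h1 h2 =>
    have := Chebyshev.T_add_two ℂ (k : ℤ)
    push_cast at *
    rw [this]
    simp only [eval_sub, eval_mul, eval_X, eval_ofNat, h1, h2]
    have hh : u * u⁻¹ = 1 := mul_inv_cancel₀ hu
    linear_combination (1/2) * (u ^ k + u⁻¹ ^ k) * hh

theorem extremal_point (x y R : ℝ) (hx : 0 < x) (hy : 0 < y) (hR : 0 ≤ R) (ζ : ℂ) (hζ : ‖ζ‖ ≤ R)
    (h : x + y * R ≤ ‖(x : ℂ) + y * ζ‖) : ζ = R := by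
  have h1 : ‖(x : ℂ) + y * ζ‖ ^ 2 = (x + y * ζ.re) ^ 2 + (y * ζ.im) ^ 2 := by
    rw [← Complex.normSq_eq_norm_sq, Complex.normSq_apply]; simp; ring
  have h2 : ‖ζ‖ ^ 2 = ζ.re ^ 2 + ζ.im ^ 2 := by
    rw [← Complex.normSq_eq_norm_sq, Complex.normSq_apply]; ring
  have h3 : (x + y * R) ^ 2 ≤ ‖(x : ℂ) + y * ζ‖ ^ 2 := by gcongr
  have h4 : ‖ζ‖ ^ 2 ≤ R ^ 2 := by gcongr
  rw [h1] at h3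
  rw [h2] at h4
  have h5 : R ≤ ζ.re := by
    have : 0 ≤ 2 * x * y * (ζ.re - R) := by nlinarith [mul_nonneg hy.le hy.le]
    have := nonneg_of_mul_nonneg_right this (by positivity)
    linarith
  have h6 : ζ.re ≤ R := (Complex.re_le_norm ζ).trans hζ
  have h7 : ζ.re = R := le_antisymm h6 h5
  have h8 : ζ.im = 0 := by
    rw [h7] at h4
    nlinarith [sq_nonneg ζ.im]
  apply Complex.ext <;> simp [h7, h8]

open Polynomial in
theorem cheb_sum_max (n : ℕ) (hn : 1 ≤ n) (d : ℕ → ℝ) (hd : ∀ k ≤ n, 0 < d k) (ρ : ℝ) (hρ : 1 ≤ ρ)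
    (u : ℂ) (hu : ‖u‖ = ρ) (F : ℂ → ℂ) (hF : F = fun ζ => ((d 0 / 2 : ℝ) : ℂ)
      + ∑ k ∈ Finset.range n, (d (k + 1) : ℂ) * (Chebyshev.T ℂ ((k + 1 : ℕ) : ℤ)).eval ζ) :
    ‖F ((u + u⁻¹) / 2)‖ ≤ ‖F (((ρ + ρ⁻¹) / 2 : ℝ) : ℂ)‖ ∧
    (‖F ((u + u⁻¹) / 2)‖ = ‖F (((ρ + ρ⁻¹) / 2 : ℝ) : ℂ)‖ →
      (u + u⁻¹) / 2 = (((ρ + ρ⁻¹) / 2 : ℝ) : ℂ)) := by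
  have hρ0 : 0 < ρ := by linarith
  have hu0 : u ≠ 0 := by rw [← norm_pos_iff, hu]; exact hρ0
  obtain ⟨m, rfl⟩ : ∃ m, n = m + 1 := ⟨n - 1, by omega⟩
  set t : ℕ → ℝ := fun k => (ρ ^ k + ρ⁻¹ ^ k) / 2 with ht
  have ht0 : ∀ k, 0 ≤ t k := fun k => by simp only [ht]; positivity
  have hTρ : ∀ k : ℕ, (Chebyshev.T ℂ (k : ℤ)).eval (((ρ + ρ⁻¹) / 2 : ℝ) : ℂ) = t k := by
    intro k
    have := cheb_joukowski (ρ : ℂ) (by exact_mod_cast hρ0.ne') k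
    push_cast [ht]
    exact this
  have hTu : ∀ k : ℕ, ‖(Chebyshev.T ℂ (k : ℤ)).eval ((u + u⁻¹) / 2)‖ ≤ t k := by
    intro k
    rw [cheb_joukowski u hu0 k, norm_div]
    simp only [ht, Complex.norm_ofNat]
    gcongr
    refine (norm_add_le _ _).trans ?_
    rw [norm_pow, norm_pow, norm_inv, hu]
  have hFρ : ‖F (((ρ + ρ⁻¹) / 2 : ℝ) : ℂ)‖
      = d 0 / 2 + d 1 * t 1 + ∑ k ∈ Finset.range m, d (k + 2) * t (k + 2) := by
    have : F (((ρ + ρ⁻¹) / 2 : ℝ) : ℂ)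
      = ((d 0 / 2 + d 1 * t 1 + ∑ k ∈ Finset.range m, d (k + 2) * t (k + 2) : ℝ) : ℂ) := by
      rw [hF]
      simp only [hTρ]
      rw [Finset.sum_range_succ']
      push_cast
      ring
    rw [this, Complex.norm_real, Real.norm_eq_abs, abs_of_nonneg]
    have := hd 0 (by omega)
    have := hd 1 (by omega)
    have := ht0 1
    have : 0 ≤ ∑ k ∈ Finset.range m, d (k + 2) * t (k + 2) :=
      Finset.sum_nonneg fun k hk => mul_nonneg (hd _ (by simp at hk; omega)).le (ht0 _)
    positivity
  have hR : t 1 = (ρ + ρ⁻¹) / 2 := by simp [ht]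
  have hFu : ‖F ((u + u⁻¹) / 2)‖ ≤ ‖((d 0 / 2 : ℝ) : ℂ) + (d 1 : ℝ) * ((u + u⁻¹) / 2)‖
      + ∑ k ∈ Finset.range m, d (k + 2) * t (k + 2) := by
    have : F ((u + u⁻¹) / 2) = (((d 0 / 2 : ℝ) : ℂ) + (d 1 : ℝ) * ((u + u⁻¹) / 2)) +
      ∑ k ∈ Finset.range m, (d (k + 2) : ℂ)
        * (Chebyshev.T ℂ ((k + 2 : ℕ) : ℤ)).eval ((u + u⁻¹) / 2) := by
      rw [hF]
      simp only []
      rw [Finset.sum_range_succ']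
      simp only [zero_add, Nat.cast_one, Chebyshev.T_one, eval_X, add_assoc, Nat.reduceAdd]
      ring
    rw [this]
    refine (norm_add_le _ _).trans ?_
    gcongr
    refine (norm_sum_le _ _).trans (Finset.sum_le_sum fun k hk => ?_)
    have hk' := hd (k + 2) (by simp at hk; omega)
    rw [norm_mul, Complex.norm_real, Real.norm_eq_abs, abs_of_pos hk']
    exact mul_le_mul_of_nonneg_left (hTu _) hk'.le
  have hζ : ‖(u + u⁻¹) / 2‖ ≤ t 1 := by simpa using hTu 1
  have d0 := hd 0 (by omega)
  have d1 := hd 1 (by omega)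
  have h01 : ‖((d 0 / 2 : ℝ) : ℂ) + (d 1 : ℝ) * ((u + u⁻¹) / 2)‖ ≤ d 0 / 2 + d 1 * t 1 := by
    refine (norm_add_le _ _).trans ?_
    rw [norm_mul, Complex.norm_real, Complex.norm_real, Real.norm_eq_abs, Real.norm_eq_abs,
      abs_of_pos d1, abs_of_pos (half_pos d0)]
    gcongr
  rw [hFρ]
  refine ⟨by linarith, fun h => ?_⟩
  rw [← hR]
  exact extremal_point (d 0 / 2) (d 1) (t 1) (half_pos d0) d1 (ht0 1) _ hζ (by linarith)

open Polynomial in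
theorem jacobiC_eq (α β : ℝ) (n : ℕ) (z : ℂ) :
    jacobiC α β n z = (1 / 2 ^ n) * aeval z (jacPoly α β n) := by
  unfold jacobiC jacPoly jacA
  rw [map_sum]
  congr 1
  refine Finset.sum_congr rfl fun k _ => ?_
  rw [map_smul]
  simp [mul_assoc]

theorem jacobiC_ofReal (α β : ℝ) (n : ℕ) (x : ℝ) :
    jacobiC α β n (x : ℂ) = (jacobiP α β n x : ℂ) := by
  unfold jacobiC jacobiP
  push_cast
  rfl

/-- if `α < β` and `α + β ≥ -1`, then the maximum of `|P_n^{(α,β)}|` over the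
Bernstein ellipse `E_ρ` is attained uniquely at the left endpoint `-(ρ + ρ⁻¹)/2` of the
major axis. -/
theorem jacobi_max_at_left_endpoint
    (α β : ℝ) (hα : -1 < α) (hβ : -1 < β) (hab : α < β) (hsum : -1 ≤ α + β)
    (ρ : ℝ) (hρ : 1 ≤ ρ) (n : ℕ) (hn : 1 ≤ n) :
    ∀ z ∈ bernsteinEllipse ρ,
      ‖jacobiC α β n z‖ ≤ |jacobiP α β n (-((ρ + ρ⁻¹) / 2))| ∧
      (‖jacobiC α β n z‖ = |jacobiP α β n (-((ρ + ρ⁻¹) / 2))| ↔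
        z = -(((ρ + ρ⁻¹) / 2 : ℝ) : ℂ)) := by
  rintro z ⟨u, hu, hz⟩
  obtain ⟨K, d, hK, hd, hP⟩ := jacPoly_expansion α β hα hab hsum n hn
  have hPR : |jacobiP α β n (-((ρ + ρ⁻¹) / 2))|
      = ‖jacobiC α β n (-(((ρ + ρ⁻¹) / 2 : ℝ) : ℂ))‖ := by
    rw [← Complex.ofReal_neg, jacobiC_ofReal, Complex.norm_real, Real.norm_eq_abs]
  rw [hPR]
  set F : ℂ → ℂ := fun ζ => ((d 0 / 2 : ℝ) : ℂ)
      + ∑ k ∈ Finset.range n,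
        (d (k + 1) : ℂ) * (Polynomial.Chebyshev.T ℂ ((k + 1 : ℕ) : ℤ)).eval ζ with hF
  have hC : ∀ ζ : ℂ, ‖jacobiC α β n (-ζ)‖ = (1 / 2 ^ n * |K|) * ‖F ζ‖ := by
    intro ζ
    have : jacobiC α β n (-ζ) = (1 / 2 ^ n * (K : ℂ)) * F ζ := by
      rw [jacobiC_eq, hP, map_smul, map_add, map_sum, hF]
      simp only [map_smul, Polynomial.aeval_C, Polynomial.Chebyshev.aeval_T,
        Polynomial.Chebyshev.T_eval_neg, Complex.real_smul, Complex.coe_algebraMap]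
      rw [mul_assoc]
      congr 3
      refine Finset.sum_congr rfl fun k _ => ?_
      have h1 : (((((k + 1 : ℕ) : ℤ).negOnePow : ℤˣ) : ℤ) : ℂ) = (-1) ^ (k + 1) := by
        rw [Int.negOnePow_def]; simp [pow_succ, zpow_add]
      have h2 : ((-1 : ℂ) ^ (k + 1)) * (-1) ^ (k + 1) = 1 := by rw [← mul_pow]; simp
      rw [h1]
      push_cast at h2 ⊢
      linear_combination (d (k + 1) : ℂ)
        * (Polynomial.Chebyshev.T ℂ ((k : ℤ) + 1)).eval ζ * h2
    rw [this, norm_mul, norm_mul, Complex.norm_real, Real.norm_eq_abs]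
    simp
  have hz' : z = -((-u + (-u)⁻¹) / 2) := by rw [hz, inv_neg]; ring
  have hpos : 0 < 1 / 2 ^ n * |K| := by have := abs_pos.2 hK; positivity
  obtain ⟨m1, m2⟩ := cheb_sum_max n hn d hd ρ hρ (-u) (by rw [norm_neg, hu]) F hF
  refine ⟨?_, ?_, ?_⟩
  · rw [hz', hC, hC]
    exact mul_le_mul_of_nonneg_left m1 hpos.le
  · intro h
    rw [hz', hC, hC] at h
    rw [hz', m2 (mul_left_cancel₀ hpos.ne' h)]
  · intro h; rw [h]
end
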